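/- Let F be any field and let G be a graph satisfying: (1) |V(G)| = 6, (2) mr(F,G) = 4, and (3) G contains no induced path P₅ on 5 vertices. Then G ∈ F₄(F). -/

import Mathlib

/-!
The lower bound `4 ≤ mr(F, G)` is a hypothesis, so the content is that every graph on five vertices
other than `P₅` has minimum rank at most `3` over every field.

A single configuration of vectors handles all of these graphs and all fields at once.  Let `u₀ = 0`
and let `u₁, …, u₇ ∈ ℤ³` be suitable sign-lifts of the seven nonzero vectors of `𝔽₂³`
(`hostVec`), with the bilinear form `x₀y₀ + x₁y₁ - x₂y₂`.  All the products `⟨u_a, u_b⟩`, except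
`⟨u₄, u₄⟩ = 2`, lie in `{0, 1, -1}`, so whether such a product vanishes in `F` does not depend
on `F`.  Hence, if the vertices of a graph can be labelled by the `u_a` so that distinct vertices
are adjacent exactly when the product of their labels is `±1` and nonadjacent exactly when it
is `0`, the Gram matrix of the labels is a graph matrix of rank at most `3` over every field
(`minRank_le_three_of_labelling`).  A finite check over the `2¹⁰` labelled graphs on five vertices
shows that every one of them either has such a labelling or is a path (`labelling_or_path`).
-/

open Matrix

/-- `A` is a symmetric matrix over `F` whose off-diagonal nonzero pattern is
given by the graph `G` (diagonal entries are unconstrained). -/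
def IsGraphMatrix (F : Type*) [Field F] {V : Type*} (G : SimpleGraph V)
    (A : Matrix V V F) : Prop :=
  A.IsSymm ∧ ∀ i j : V, i ≠ j → (A i j ≠ 0 ↔ G.Adj i j)

/-- The minimum rank `mr(F, G)` of the graph `G` over the field `F`. -/
noncomputable def minRank (F : Type*) [Field F] {V : Type*} [Fintype V]
    (G : SimpleGraph V) : ℕ :=
  sInf {r : ℕ | ∃ A : Matrix V V F, IsGraphMatrix F G A ∧ A.rank = r}

/-- The graph `G - v` obtained from `G` by deleting the vertex `v`. -/
def deleteVert {V : Type*} (G : SimpleGraph V) (v : V) : SimpleGraph {u : V // u ≠ v} :=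
  SimpleGraph.comap Subtype.val G

/-- `G ∈ F_K(F)`: `G` is a minimal forbidden subgraph for the class of graphs
with minimum rank at most `K - 1` over `F`, i.e. `mr(F, G) ≥ K` and
`mr(F, G - v) ≤ K - 1` for every vertex `v`. -/
def MemForbClass (F : Type*) [Field F] (K : ℕ) {V : Type*} [Fintype V] [DecidableEq V]
    (G : SimpleGraph V) : Prop :=
  K ≤ minRank F G ∧ ∀ v : V, minRank F (deleteVert G v) + 1 ≤ K

/-- The path `P₅` on vertices `0, 1, 2, 3, 4` with edges `01, 12, 23, 34`. -/
def pathP5 : SimpleGraph (Fin 5) :=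
  SimpleGraph.fromEdgeSet {s(0,1), s(1,2), s(2,3), s(3,4)}

/-- The eight vectors of `ℤ³` used as vertex labels: zero, and a lift of each nonzero vector of
`𝔽₂³`, with the signs chosen so that almost all values of `hostForm` are `0`, `1` or `-1`. -/
def hostVec : Fin 8 → Fin 3 → ℤ :=
  ![![0, 0, 0], ![1, 0, 0], ![0, 1, 0], ![0, 0, 1],
    ![1, -1, 0], ![1, 0, 1], ![0, 1, 1], ![1, 1, 1]]

/-- The diagonal of the matrix of the bilinear form `x₀y₀ + x₁y₁ - x₂y₂`. -/
def hostSign : Fin 3 → ℤ := ![1, 1, -1]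

/-- The Gram matrix of the label vectors `hostVec`. -/
def hostForm (a b : Fin 8) : ℤ :=
  hostVec a 0 * hostVec b 0 + hostVec a 1 * hostVec b 1 - hostVec a 2 * hostVec b 2

/-- `hostOK a b e` says that the labels `a` and `b` are permitted on two distinct vertices whose
adjacency is `e`: their product is `±1` when `e` is true and `0` when `e` is false.  The two
numerals are the `8 × 8` tables of these conditions, entry `(a, b)` being the bit `8 * a + b`;
the bit of `(4, 4)`, where the product is `2`, is off in both. -/
def hostOK (a b : Fin 8) (e : Bool) : Bool :=
  (bif e then 10249166250027823616 else 8197577754962251263 : ℕ).testBit (8 * a.val + b.val)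

lemma hostForm_of_hostOK_true : ∀ a b : Fin 8, hostOK a b true = true →
    hostForm a b = 1 ∨ hostForm a b = -1 := by
  decide +kernel

lemma hostForm_of_hostOK_false : ∀ a b : Fin 8, hostOK a b false = true →
    hostForm a b = 0 := by
  decide +kernel

lemma hostForm_comm (a b : Fin 8) : hostForm a b = hostForm b a := by
  unfold hostForm
  ring

/-- The symmetric `5 × 5` Boolean matrix with false diagonal and given entries above it. -/
def boolGraph (a01 a02 a03 a04 a12 a13 a14 a23 a24 a34 : Bool) : Fin 5 → Fin 5 → Bool :=
  ![![false, a01, a02, a03, a04],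
    ![a01, false, a12, a13, a14],
    ![a02, a12, false, a23, a24],
    ![a03, a13, a23, false, a34],
    ![a04, a14, a24, a34, false]]

/-- The list of all labels, in an order that keeps the search below short.  The explicit constructor
form spares the kernel the reduction of numerals in `Fin 8`. -/
def hostLabels : List (Fin 8) :=
  [⟨2, by decide⟩, ⟨5, by decide⟩, ⟨1, by decide⟩, ⟨6, by decide⟩,
    ⟨4, by decide⟩, ⟨7, by decide⟩, ⟨0, by decide⟩, ⟨3, by decide⟩]

/-- Backtracking search for a labelling by the host vectors of the graph whose adjacency matrix is
`boolGraph a01 a02 a03 a04 a12 a13 a14 a23 a24 a34`. -/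
def labelSearch (a01 a02 a03 a04 a12 a13 a14 a23 a24 a34 : Bool) : Bool :=
  hostLabels.any fun a => hostLabels.any fun b => hostOK a b a01 &&
  hostLabels.any fun c => hostOK a c a02 && hostOK b c a12 &&
  hostLabels.any fun d => hostOK a d a03 && hostOK b d a13 && hostOK c d a23 &&
  hostLabels.any fun e => hostOK a e a04 && hostOK b e a14 && hostOK c e a24 && hostOK d e a34

/-- The Boolean graph is a path `p q r s t`.  The conditions are interleaved with the quantifiers,
so that deciding this is a backtracking search. -/
def IsPathBool (g : Fin 5 → Fin 5 → Bool) : Prop :=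
  ∃ p q : Fin 5, g p q = true ∧
  ∃ r : Fin 5, (p ≠ r ∧ g p r = false ∧ g q r = true) ∧
  ∃ s : Fin 5, (p ≠ s ∧ q ≠ s ∧ g p s = false ∧ g q s = false ∧ g r s = true) ∧
  ∃ t : Fin 5, (p ≠ t ∧ q ≠ t ∧ r ≠ t) ∧ g p t = false ∧ g q t = false ∧ g r t = false ∧
    g s t = true

instance (g : Fin 5 → Fin 5 → Bool) : Decidable (IsPathBool g) := by
  unfold IsPathBool; infer_instance

/-- Every graph on five vertices has a labelling by the host vectors or is a path; this is checked
by evaluation for each of the `2¹⁰` adjacency matrices. -/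
lemma labelling_or_path : ∀ a01 a02 a03 a04 a12 a13 a14 a23 a24 a34 : Bool,
    labelSearch a01 a02 a03 a04 a12 a13 a14 a23 a24 a34 = true ∨
    IsPathBool (boolGraph a01 a02 a03 a04 a12 a13 a14 a23 a24 a34) := by
  decide +kernel

lemma minRank_le_of_isGraphMatrix {F : Type*} [Field F] {V : Type*} [Fintype V]
    {G : SimpleGraph V} {A : Matrix V V F} (hA : IsGraphMatrix F G A) :
    minRank F G ≤ A.rank :=
  Nat.sInf_le ⟨A, hA, rfl⟩

/-- The Gram matrix of a labelling, reduced to `F`, factors through `F³`. -/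
lemma minRank_le_three_of_labelling (F : Type*) [Field F] {V : Type*} [Fintype V]
    (H : SimpleGraph V) (f : V → Fin 8)
    (hadj : ∀ i j, H.Adj i j → hostForm (f i) (f j) = 1 ∨ hostForm (f i) (f j) = -1)
    (hnon : ∀ i j, i ≠ j → ¬ H.Adj i j → hostForm (f i) (f j) = 0) :
    minRank F H ≤ 3 := by
  classical
  let B : Matrix V (Fin 3) F := Matrix.of fun i k => (hostVec (f i) k : F)
  let C : Matrix (Fin 3) V F :=
    Matrix.of fun k j => ((hostSign k * hostVec (f j) k : ℤ) : F)
  have hBC : ∀ i j, (B * C) i j = (hostForm (f i) (f j) : F) := by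
    intro i j
    simp [B, C, Matrix.mul_apply, hostForm, hostSign, Fin.sum_univ_three, sub_eq_add_neg]
  have hA : IsGraphMatrix F H (B * C) := by
    refine ⟨?_, fun i j hij => ?_⟩
    · ext i j
      rw [Matrix.transpose_apply, hBC, hBC, hostForm_comm]
    · rw [hBC]
      constructor
      · intro h
        by_contra hn
        exact h (by rw [hnon i j hij hn, Int.cast_zero])
      · intro h
        rcases hadj i j h with h | h <;> simp [h]
  calc minRank F H ≤ (B * C).rank := minRank_le_of_isGraphMatrix hA
    _ ≤ B.rank := Matrix.rank_mul_le_left B C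
    _ ≤ 3 := by simpa using B.rank_le_card_width

lemma minRank_le_three_of_card_five (F : Type*) [Field F] {V : Type*} [Fintype V]
    (H : SimpleGraph V) (hcard : Fintype.card V = 5) (hP : ¬ Nonempty (pathP5 ↪g H)) :
    minRank F H ≤ 3 := by
  classical
  let e : Fin 5 ≃ V := (Fintype.equivFinOfCardEq hcard).symm
  let g : Fin 5 → Fin 5 → Bool := fun i j => decide (H.Adj (e i) (e j))
  have hgs : ∀ i j, g i j = g j i := fun i j => by simp [g, H.adj_comm]
  have hgi : ∀ i, g i i = false := fun i => by simp [g]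
  have hg : g = boolGraph (g 0 1) (g 0 2) (g 0 3) (g 0 4) (g 1 2) (g 1 3) (g 1 4)
      (g 2 3) (g 2 4) (g 3 4) := by
    funext i j
    fin_cases i <;> fin_cases j <;> first | exact hgi _ | rfl | exact hgs _ _
  have key := labelling_or_path (g 0 1) (g 0 2) (g 0 3) (g 0 4) (g 1 2) (g 1 3) (g 1 4)
      (g 2 3) (g 2 4) (g 3 4)
  rw [← hg] at key
  simp only [labelSearch, List.any_eq_true, Bool.and_eq_true, and_assoc] at key
  rcases key with ⟨a, -, b, -, h01, c, -, h02, h12, d, -, h03, h13, h23, x, -,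
      h04, h14, h24, h34⟩ |
    ⟨p, q, hpq, r, ⟨npr, hpr, hqr⟩, s, ⟨nps, nqs, hps, hqs, hrs⟩, t, ⟨npt, nqt, nrt⟩,
      hpt, hqt, hrt, hst⟩
  · let f : Fin 5 → Fin 8 := ![a, b, c, d, x]
    have hlt : ∀ i j, i < j → hostOK (f i) (f j) (g i j) = true := by
      intro i j hij
      fin_cases i <;> fin_cases j <;> first | exact absurd hij (by decide) | assumption
    have hform : ∀ i j, i ≠ j →
        (g i j = true → hostForm (f i) (f j) = 1 ∨ hostForm (f i) (f j) = -1) ∧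
        (g i j = false → hostForm (f i) (f j) = 0) := by
      intro i j hij
      rcases lt_or_gt_of_ne hij with h | h
      · have := hlt i j h
        exact ⟨fun hh => hostForm_of_hostOK_true _ _ (hh ▸ this),
          fun hh => hostForm_of_hostOK_false _ _ (hh ▸ this)⟩
      · have := hlt j i h
        rw [hgs i j, hostForm_comm]
        exact ⟨fun hh => hostForm_of_hostOK_true _ _ (hh ▸ this),
          fun hh => hostForm_of_hostOK_false _ _ (hh ▸ this)⟩
    refine minRank_le_three_of_labelling F H (f ∘ e.symm) (fun i j h => ?_) (fun i j hij h => ?_)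
    · exact (hform (e.symm i) (e.symm j) (e.symm.injective.ne h.ne)).1 (by simpa [g] using h)
    · exact (hform (e.symm i) (e.symm j) (e.symm.injective.ne hij)).2 (by simpa [g] using h)
  · exfalso
    let π : Fin 5 → Fin 5 := ![p, q, r, s, t]
    -- Consecutive vertices are distinct because `g` vanishes on the diagonal.
    have hne : ∀ i j, g i j = true → i ≠ j := by
      rintro i j h rfl
      simp [hgi] at h
    have npq := hne _ _ hpq
    have nqr := hne _ _ hqr
    have nrs := hne _ _ hrs
    have nst := hne _ _ hst
    have hinj : Function.Injective π := by
      intro i j hij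
      fin_cases i <;> fin_cases j <;> first | rfl | exact absurd hij ‹_› | exact absurd hij.symm ‹_›
    have hπlt : ∀ i j, i < j → (g (π i) (π j) = true ↔ pathP5.Adj i j) := by
      intro i j hij
      fin_cases i <;> fin_cases j <;> first
        | exact absurd hij (by decide)
        | simp [π, pathP5, hpq, hqr, hrs, hst, hpr, hps, hpt, hqs, hqt, hrt]
    have hπ : ∀ i j, g (π i) (π j) = true ↔ pathP5.Adj i j := by
      intro i j
      rcases lt_trichotomy i j with h | rfl | h
      · exact hπlt i j h
      · simp [hgi]
      · rw [hgs, pathP5.adj_comm]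
        exact hπlt j i h
    refine hP ⟨⟨⟨fun i => e (π i), e.injective.comp hinj⟩, ?_⟩⟩
    intro i j
    simpa [g] using hπ i j

/-- Let `F` be any field and let `G` be a graph with 6 vertices, `mr(F, G) = 4`, and
no induced `P₅`.  Then `G ∈ F₄(F)`. -/
theorem memForbClass_of_card_six {V : Type*} [Fintype V] [DecidableEq V]
    (F : Type*) [Field F] (G : SimpleGraph V)
    (h1 : Fintype.card V = 6) (h2 : minRank F G = 4)
    (h3 : ¬ Nonempty (pathP5 ↪g G)) :
    MemForbClass F 4 G := by
  refine ⟨h2.ge, fun v => ?_⟩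
  have hcard : Fintype.card {u : V // u ≠ v} = 5 := by
    simp [h1]
  have hP : ¬ Nonempty (pathP5 ↪g deleteVert G v) := fun ⟨φ⟩ =>
    h3 ⟨φ.trans (SimpleGraph.Embedding.comap (Function.Embedding.subtype _) G)⟩
  have := minRank_le_three_of_card_five F (deleteVert G v) hcard hP
  omega
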